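/- Let q be even and let E ≤ F_q^{2n} be a self-orthogonal subspace (E ⊆ E^⊥) of dimension n−1 containing the all-ones vector 1 = (1,…,1). Then every subspace D with E ≤ D ≤ E^⊥ and dim D = n is self-dual; in particular, the number of self-dual codes D ≤ F_q^{2n} containing E is exactly q+1. -/

import Mathlib

noncomputable section

namespace KneserHeckeCodes

open Finset

variable {F : Type} [Field F] [Fintype F]

/-- The all-ones vector. -/
def allOnes (F : Type) [One F] (N : ℕ) : Fin N → F := fun _ => 1

/-- The dual code with respect to the (bilinear or Hermitian) form
`b(x,y) = ∑ i, x i * f (y i)`. -/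
def dualCode {N : ℕ} (f : F → F) (C : Submodule F (Fin N → F)) : Submodule F (Fin N → F) where
  carrier := {v | ∀ c ∈ C, ∑ i, v i * f (c i) = 0}
  add_mem' := by
    intro a b ha hb c hc
    have h1 := ha c hc
    have h2 := hb c hc
    simp [Pi.add_apply, add_mul, Finset.sum_add_distrib, h1, h2]
  zero_mem' := by
    intro c hc
    simp
  smul_mem' := by
    intro r a ha c hc
    have h := ha c hc
    simp [Pi.smul_apply, smul_eq_mul, mul_assoc, ← Finset.mul_sum, h]

/-- Action of a coordinate permutation on a code. -/
def permCode {N : ℕ} (π : Equiv.Perm (Fin N)) (C : Submodule F (Fin N → F)) :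
    Submodule F (Fin N → F) :=
  C.map (LinearMap.funLeft F F π)

/-- Permutation equivalence of codes. -/
def equivCode {N : ℕ} (C D : Submodule F (Fin N → F)) : Prop :=
  ∃ π : Equiv.Perm (Fin N), permCode π C = D

/-- The order of the automorphism group of a code. -/
def autCard {N : ℕ} (C : Submodule F (Fin N → F)) : ℕ :=
  Nat.card {π : Equiv.Perm (Fin N) // permCode π C = C}

/-- `mon c v` is the number of columns of the `m × N` matrix with rows `c` equal to `v`. -/
def mon {m N : ℕ} (c : Fin m → (Fin N → F)) (v : Fin m → F) : ℕ :=
  Nat.card {i : Fin N // ∀ j, c j i = v j}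

/-- `aX X C` is the number of `m`-tuples of codewords of `C` with monomial `X`. -/
def aX {m N : ℕ} (X : (Fin m → F) → ℕ) (C : Submodule F (Fin N → F)) : ℕ :=
  Nat.card {c : Fin m → (Fin N → F) // (∀ j, c j ∈ C) ∧ mon c = X}

/-- The set `M_m` of monomials of degree `N` in genus `m`. -/
def MmSet (F : Type) [Fintype F] (m N : ℕ) : Set ((Fin m → F) → ℕ) :=
  {X | ∑ v, X v = N}

/-- The rank of a monomial. -/
def rkX (F : Type) [Field F] {m : ℕ} (X : (Fin m → F) → ℕ) : ℕ :=
  Module.finrank F (Submodule.span F {v : Fin m → F | 0 < X v})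

/-- The set `M*_m` of monomials of degree `N` and full rank `m`. -/
def MstarSet (F : Type) [Field F] [Fintype F] (m N : ℕ) : Set ((Fin m → F) → ℕ) :=
  {X | X ∈ MmSet F m N ∧ rkX F X = m}

instance finiteSubmodule {N : ℕ} : Finite (Submodule F (Fin N → F)) :=
  Finite.of_injective (fun C => (C : Set (Fin N → F))) SetLike.coe_injective

/-- The set of equivalence classes of codes in the family `𝓕`. -/
abbrev ClassesB {N : ℕ} (𝓕 : Set (Submodule F (Fin N → F))) : Type :=
  Quot (fun C D : 𝓕 => equivCode C.1 D.1)

/-- The equivalence class of a code. -/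
def clsOf {N : ℕ} {𝓕 : Set (Submodule F (Fin N → F))} (C : 𝓕) : ClassesB 𝓕 :=
  Quot.mk _ C

/-- A representative of an equivalence class. -/
def repB {N : ℕ} {𝓕 : Set (Submodule F (Fin N → F))} (b : ClassesB 𝓕) : 𝓕 :=
  Quot.out b

/-- The Hermitian inner product on `V` with `([C],[D]) = |Aut C| δ_{[C],[D]}`. -/
def innerV {N : ℕ} (𝓕 : Set (Submodule F (Fin N → F))) (v w : ClassesB 𝓕 → ℂ) : ℂ :=
  letI : Fintype (ClassesB 𝓕) := Fintype.ofFinite _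
  ∑ b : ClassesB 𝓕, (starRingEnd ℂ) (v b) * w b * (autCard (repB b).1 : ℂ)

/-- The `k`-th Kneser-Hecke operator `T_k` on `V`, where `n` is the dimension of the codes:
`T_k [C] = ∑_{D ∈ 𝓕, dim (C ⊓ D) = n - k} [D]`. -/
def heckeT {N : ℕ} (𝓕 : Set (Submodule F (Fin N → F))) (n k : ℕ)
    (v : ClassesB 𝓕 → ℂ) : ClassesB 𝓕 → ℂ :=
  letI : Fintype (ClassesB 𝓕) := Fintype.ofFinite _
  fun b' => ∑ b : ClassesB 𝓕, v b *
    (Nat.card {D : 𝓕 // Module.finrank F ↥((repB b).1 ⊓ D.1) + k = n ∧ clsOf D = b'} : ℂ)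

/-- The linear extension of `a_X` to `V`. -/
def aXc {N m : ℕ} (𝓕 : Set (Submodule F (Fin N → F))) (X : (Fin m → F) → ℕ)
    (v : ClassesB 𝓕 → ℂ) : ℂ :=
  letI : Fintype (ClassesB 𝓕) := Fintype.ofFinite _
  ∑ b : ClassesB 𝓕, v b * (aX X (repB b).1 : ℂ)

/-- `V_m`, the joint kernel of all `a_X`, `X ∈ M_m`. -/
def VmSet {N : ℕ} (𝓕 : Set (Submodule F (Fin N → F))) (m : ℕ) : Set (ClassesB 𝓕 → ℂ) :=
  {v | ∀ X ∈ MmSet F m N, aXc 𝓕 X v = 0}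

/-- `V_{m-1}` (with `V_{-1} = V`). -/
def VmPred {N : ℕ} (𝓕 : Set (Submodule F (Fin N → F))) (m : ℕ) : Set (ClassesB 𝓕 → ℂ) :=
  match m with
  | 0 => Set.univ
  | m + 1 => VmSet 𝓕 m

/-- `W_m = V_m^⊥`. -/
def WmSet {N : ℕ} (𝓕 : Set (Submodule F (Fin N → F))) (m : ℕ) : Set (ClassesB 𝓕 → ℂ) :=
  {w | ∀ v ∈ VmSet 𝓕 m, innerV 𝓕 w v = 0}

/-- `Y_m = W_m ∩ V_{m-1}`. -/
def YmSet {N : ℕ} (𝓕 : Set (Submodule F (Fin N → F))) (m : ℕ) : Set (ClassesB 𝓕 → ℂ) :=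
  WmSet 𝓕 m ∩ VmPred 𝓕 m

/-- `∑_{E ∈ E_C(c)} α_E`, counted as the number of pairs `(E, D)` with `E ≤ C` of
dimension `n-1` containing all entries of `c` and `D ∈ 𝓕` with `D ⊓ C = E`. -/
def pairCount {N : ℕ} (𝓕 : Set (Submodule F (Fin N → F))) (n : ℕ)
    (C : Submodule F (Fin N → F)) {m : ℕ} (c : Fin m → (Fin N → F)) : ℕ :=
  Nat.card {ED : Submodule F (Fin N → F) × 𝓕 //
    ED.1 ≤ C ∧ Module.finrank F ↥ED.1 + 1 = n ∧ (∀ j, c j ∈ ED.1) ∧ ED.2.1 ⊓ C = ED.1}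

/-- Condition ⋆ at level `m` for the subset `M⁰ ⊆ M*_m` with constant `α`. -/
def CondStar {N : ℕ} (𝓕 : Set (Submodule F (Fin N → F))) (n m : ℕ)
    (M0 : Set ((Fin m → F) → ℕ)) (α : ℕ) : Prop :=
  M0 ⊆ MstarSet F m N ∧
  VmSet 𝓕 m = {v | v ∈ VmPred 𝓕 m ∧ ∀ X ∈ M0, aXc 𝓕 X v = 0} ∧
  ∀ C ∈ 𝓕, ∀ c : Fin m → (Fin N → F), (∀ j, c j ∈ C) → mon c ∈ M0 →
    pairCount 𝓕 n C c = α

/-- The genus-`m` complete weight enumerator. -/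
def cwe {N : ℕ} (m : ℕ) (C : Submodule F (Fin N → F)) : MvPolynomial (Fin m → F) ℂ :=
  letI : Fintype C := Fintype.ofFinite _
  ∑ c : Fin m → C, MvPolynomial.monomial
    (Finsupp.equivFunOnFinite.symm (mon (fun j => (c j : Fin N → F)))) (1 : ℂ)

end KneserHeckeCodes

open KneserHeckeCodes

theorem aux_finrank_map {K V W : Type*} [Field K] [AddCommGroup V] [Module K V]
    [FiniteDimensional K V] [AddCommGroup W] [Module K W] (f : V →ₗ[K] W)
    (P : Submodule K V) (h : LinearMap.ker f ≤ P) :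
    Module.finrank K (P.map f) + Module.finrank K (LinearMap.ker f) = Module.finrank K P := by
  have h1 := LinearMap.finrank_range_add_finrank_ker (f.domRestrict P)
  rw [LinearMap.range_domRestrict, LinearMap.ker_domRestrict] at h1
  rw [← h1, (Submodule.comapSubtypeEquivOfLe h).finrank_eq]

theorem aux_count {K V : Type*} [Field K] [Finite K] [AddCommGroup V] [Module K V]
    [FiniteDimensional K V] (E M : Submodule K V) (hEM : E ≤ M)
    (h2 : Module.finrank K M = Module.finrank K E + 2) :
    Nat.card {D : Submodule K V // E ≤ D ∧ D ≤ M ∧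
      Module.finrank K D = Module.finrank K E + 1} = Nat.card K + 1 := by
  set S : Submodule K M := E.comap M.subtype with hS
  have hSf : Module.finrank K S = Module.finrank K E :=
    (Submodule.comapSubtypeEquivOfLe hEM).finrank_eq
  have hQ : Module.finrank K (M ⧸ S) = 2 := by
    have := S.finrank_quotient_add_finrank
    omega
  have key : ∀ P : Submodule K M, S ≤ P →
      Module.finrank K (P.map S.mkQ) + Module.finrank K E = Module.finrank K P := by
    intro P hP
    have := aux_finrank_map S.mkQ P (by simpa using hP)
    rwa [Submodule.ker_mkQ, hSf] at this
  rw [← Projectivization.card_of_finrank_two K (M ⧸ S) hQ,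
    Nat.card_congr (Projectivization.equivSubmodule K (M ⧸ S))]
  refine Nat.card_congr
    { toFun := fun D => ⟨(D.1.comap M.subtype).map S.mkQ, ?_⟩
      invFun := fun H => ⟨(H.1.comap S.mkQ).map M.subtype, ?_, ?_, ?_⟩
      left_inv := ?_
      right_inv := ?_ }
  · obtain ⟨D, h1, h3, h4⟩ := D
    have := key (D.comap M.subtype) (Submodule.comap_mono h1)
    rw [(Submodule.comapSubtypeEquivOfLe h3).finrank_eq] at this
    simp only
    omega
  · intro x hx
    refine ⟨⟨x, hEM hx⟩, ?_, rfl⟩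
    have : S.mkQ ⟨x, hEM hx⟩ = 0 := by
      simpa [hS] using hx
    simp only [SetLike.mem_coe, Submodule.mem_comap, this, zero_mem]
  · exact Submodule.map_subtype_le _ _
  · have := key (H.1.comap S.mkQ) (Submodule.le_comap_mkQ _ _)
    rw [Submodule.map_comap_eq_of_surjective S.mkQ_surjective, H.2] at this
    rw [Submodule.finrank_map_subtype_eq]
    omega
  · rintro ⟨D, h1, h3, h4⟩
    apply Subtype.ext
    simp only
    rw [Submodule.comap_map_mkQ, sup_eq_right.2 (Submodule.comap_mono h1),
      Submodule.map_comap_subtype, inf_eq_right.2 h3]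
  · rintro ⟨H, hH⟩
    apply Subtype.ext
    simp only
    rw [Submodule.comap_map_eq_of_injective M.injective_subtype,
      Submodule.map_comap_eq_of_surjective S.mkQ_surjective]

theorem aux_finrank_dual {F : Type} [Field F] [Fintype F] {N : ℕ}
    (C : Submodule F (Fin N → F)) :
    Module.finrank F C + Module.finrank F (dualCode (id : F → F) C) = N := by
  classical
  have hB : (Matrix.toBilin' (1 : Matrix (Fin N) (Fin N) F)).Nondegenerate :=
    LinearMap.BilinForm.nondegenerate_toBilin'_of_det_ne_zero' _ (by simp)
  have h := LinearMap.BilinForm.finrank_orthogonal hB C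
  have e : (Matrix.toBilin' (1 : Matrix (Fin N) (Fin N) F)).orthogonal C
      = dualCode (id : F → F) C := by
    ext v
    simp only [LinearMap.BilinForm.mem_orthogonal_iff, dualCode, Submodule.mem_mk]
    refine forall₂_congr fun c hc => ?_
    simp [LinearMap.BilinForm.isOrtho_def, Matrix.toBilin'_apply', dotProduct, mul_comm]
  rw [e] at h
  have := Submodule.finrank_le C
  simp at h this
  omega

theorem aux_mem_dual {F : Type} [Field F] [Fintype F] {N : ℕ}
    {C : Submodule F (Fin N → F)} {v : Fin N → F} :
    v ∈ dualCode (id : F → F) C ↔ ∀ c ∈ C, ∑ i, v i * c i = 0 := Iff.rfl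

/-- For `q` even and a self-orthogonal subspace `E ≤ F_q^{2n}` of dimension
`n-1` containing the all-ones vector, every `D` with `E ≤ D ≤ E^⊥` and `dim D = n` is
self-dual; in particular there are exactly `q + 1` self-dual codes containing `E`. -/
theorem selfDual_count_above_qEI
    {F : Type} [Field F] [Fintype F] (hq : Even (Fintype.card F)) {n : ℕ}
    (E : Submodule F (Fin (2 * n) → F)) (hEso : E ≤ dualCode (id : F → F) E)
    (hdim : Module.finrank F ↥E + 1 = n) (hone : allOnes F (2 * n) ∈ E) :
    (∀ D : Submodule F (Fin (2 * n) → F), E ≤ D → D ≤ dualCode (id : F → F) E →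
        Module.finrank F ↥D = n → D = dualCode (id : F → F) D) ∧
    Nat.card {D : Submodule F (Fin (2 * n) → F) //
        D = dualCode (id : F → F) D ∧ E ≤ D} = Fintype.card F + 1 := by
  have hchar : CharP F 2 := by
    have : ringChar F = 2 := FiniteField.even_card_iff_char_two.2 (Nat.even_iff.1 hq)
    exact ringChar.of_eq this
  have hK := aux_finrank_dual E
  have hself : ∀ v ∈ dualCode (id : F → F) E, ∑ i, v i * v i = 0 := by
    intro v hv
    have := aux_mem_dual.1 hv _ hone
    simp only [allOnes, mul_one] at this
    rw [← CharTwo.sum_mul_self, this, mul_zero]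
  have main : ∀ D : Submodule F (Fin (2 * n) → F), E ≤ D → D ≤ dualCode (id : F → F) E →
        Module.finrank F ↥D = n → D = dualCode (id : F → F) D := by
    intro D h1 h2 h3
    have hDD := aux_finrank_dual D
    refine Submodule.eq_of_le_of_finrank_eq ?_ (by omega)
    obtain ⟨v, hvD, hvE⟩ : ∃ v ∈ D, v ∉ E := by
      by_contra! h
      have := Submodule.finrank_mono (show D ≤ E from h)
      omega
    have hsup : E ⊔ Submodule.span F {v} = D := by
      refine Submodule.eq_of_le_of_finrank_eq
        (sup_le h1 ((Submodule.span_singleton_le_iff_mem _ _).2 hvD)) ?_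
      rw [Submodule.finrank_sup_span_singleton hvE]
      omega
    intro x hx
    rw [aux_mem_dual]
    intro y hy
    have hx' := h2 hx
    rw [← hsup, Submodule.mem_sup] at hx hy
    obtain ⟨e, he, w, hw, rfl⟩ := hx
    obtain ⟨e', he', w', hw', rfl⟩ := hy
    obtain ⟨a, rfl⟩ := Submodule.mem_span_singleton.1 hw
    obtain ⟨b, rfl⟩ := Submodule.mem_span_singleton.1 hw'
    have A := aux_mem_dual.1 hx' e' he'
    have B := aux_mem_dual.1 (h2 hvD) e he
    have C := hself v (h2 hvD)
    calc ∑ i, (e + a • v) i * (e' + b • v) i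
        = ∑ i, (e + a • v) i * e' i + b * ∑ i, v i * e i + a * b * ∑ i, v i * v i := by
          simp only [Finset.mul_sum, ← Finset.sum_add_distrib]
          refine Finset.sum_congr rfl fun i _ => ?_
          simp only [Pi.add_apply, Pi.smul_apply, smul_eq_mul]
          ring
      _ = 0 := by rw [A, B, C]; ring
  refine ⟨main, ?_⟩
  rw [← Nat.card_eq_fintype_card, ← aux_count E (dualCode (id : F → F) E) hEso (by omega)]
  refine Nat.card_congr (Equiv.subtypeEquivRight fun D => ?_)
  constructor
  · rintro ⟨h1, h2⟩
    have hDD := aux_finrank_dual D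
    rw [← h1] at hDD
    refine ⟨h2, ?_, by omega⟩
    intro x hx
    rw [h1] at hx
    exact fun c hc => hx c (h2 hc)
  · rintro ⟨h1, h2, h3⟩
    exact ⟨main D h1 h2 (by omega), h1⟩
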